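/- Every pair (ᾱ, β̄) in the achievable storage-retrieval rate region R of the (2,2) PIR problem satisfies 3ᾱ + 8β̄ ≥ 10. -/

import Mathlib

open scoped BigOperators

namespace PIR

/-- Messages are length-`L` vectors over `F_2`. -/
abbrev Msg (L : ℕ) := Fin L → ZMod 2

/-- A (2,2) PIR code (without the correctness condition) with message length `L`
and query alphabet `Q`.  The two messages are independent and uniform on `F_2^L`;
the queries are independent of the messages (built into the model: the query
distribution `P k` for desired message `k` does not depend on the messages). -/
structure CodeBase (L : ℕ) (Q : Type) [Fintype Q] [DecidableEq Q] where
  /-- query distribution for desired message index `k` -/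
  P : Fin 2 → Q × Q → ℝ
  P_nonneg : ∀ k qq, 0 ≤ P k qq
  P_sum : ∀ k, ∑ qq : Q × Q, P k qq = 1
  /-- number of stored `F_2` symbols at database `n` -/
  stor : Fin 2 → ℕ
  /-- storage encoders -/
  phi : (n : Fin 2) → Msg L × Msg L → (Fin (stor n) → ZMod 2)
  /-- answer lengths -/
  blen : Fin 2 → Q → ℕ
  /-- deterministic answer functions -/
  ans : (n : Fin 2) → (q : Q) → (Fin (stor n) → ZMod 2) → (Fin (blen n q) → ZMod 2)
  /-- decoding functions -/
  dec : (k : Fin 2) → (q₁ q₂ : Q) → (Fin (blen 0 q₁) → ZMod 2) →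
      (Fin (blen 1 q₂) → ZMod 2) → Msg L
  /-- Privacy: for each database `n`, the joint distribution of
  `(Q_n^{[k]}, A_n^{[k]}, S_n)` is the same for `k = 1, 2`.  Since the answer
  `A_n` is the fixed deterministic function `ans` of `(Q_n, S_n)` (not
  depending on `k`), this is expressed as equality of the joint distributions of
  `(Q_n, S_n)` (messages uniform, queries independent of messages). -/
  privacy : ∀ (n : Fin 2) (q : Q) (s : Fin (stor n) → ZMod 2),
    (∑ qq : Q × Q, if (if n = 0 then qq.1 else qq.2) = q then P 0 qq else 0) *
      ((Finset.univ.filter (fun w : Msg L × Msg L => phi n w = s)).card : ℝ) =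
    (∑ qq : Q × Q, if (if n = 0 then qq.1 else qq.2) = q then P 1 qq else 0) *
      ((Finset.univ.filter (fun w : Msg L × Msg L => phi n w = s)).card : ℝ)

variable {L : ℕ} {Q : Type} [Fintype Q] [DecidableEq Q]

/-- The desired message `W_k`. -/
def target (k : Fin 2) (w : Msg L × Msg L) : Msg L := if k = 0 then w.1 else w.2

/-- The decoder output `Ŵ_k` when the realized queries are `qq` and the messages `w`. -/
def retrieved (C : CodeBase L Q) (k : Fin 2) (qq : Q × Q) (w : Msg L × Msg L) : Msg L :=
  C.dec k qq.1 qq.2 (C.ans 0 qq.1 (C.phi 0 w)) (C.ans 1 qq.2 (C.phi 1 w))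

/-- Zero-error correctness: `Ŵ_k = W_k` for all realizations. -/
def IsZeroError (C : CodeBase L Q) : Prop :=
  ∀ (k : Fin 2) (w : Msg L × Msg L) (qq : Q × Q), C.P k qq ≠ 0 →
    retrieved C k qq w = target k w

/-- The average probability of error `P_e`. -/
noncomputable def Pe (C : CodeBase L Q) : ℝ :=
  (1/2) * ∑ k : Fin 2, ∑ w : Msg L × Msg L, ∑ qq : Q × Q,
    ((2:ℝ)^(2*L))⁻¹ * C.P k qq * (if retrieved C k qq w ≠ target k w then 1 else 0)

/-- The retrieval rate `β_n = E[β_n^{(Q_n)}]` (the marginal of `Q_n` is the same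
for `k=1,2` by privacy; we use `k=1`, i.e. index `0`). -/
noncomputable def betaRate (C : CodeBase L Q) (n : Fin 2) : ℝ :=
  ∑ qq : Q × Q, C.P 0 qq * (C.blen n (if n = 0 then qq.1 else qq.2) : ℝ)

/-- A linear PIR code: storage encoders and answer functions are `F_2`-linear. -/
def IsLinear (C : CodeBase L Q) : Prop :=
  (∀ n : Fin 2, IsLinearMap (ZMod 2) (C.phi n)) ∧
  (∀ (n : Fin 2) (q : Q), IsLinearMap (ZMod 2) (C.ans n q))

/-- A bundled PIR code (with its query alphabet). -/
structure Code (L : ℕ) where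
  Q : Type
  [fQ : Fintype Q]
  [dQ : DecidableEq Q]
  base : CodeBase L Q

attribute [instance] Code.fQ Code.dQ

/-- A normalized storage-retrieval pair `(ᾱ, β̄)` is achievable. -/
def Achievable (ab : ℝ × ℝ) : Prop :=
  ∀ ε > (0:ℝ), ∃ L₀ : ℕ, ∀ L ≥ L₀, ∃ C : Code L,
    IsZeroError C.base ∧
    ((C.base.stor 0 + C.base.stor 1 : ℕ) : ℝ) / 2 ≤ L * (ab.1 + ε) ∧
    (betaRate C.base 0 + betaRate C.base 1) / 2 ≤ L * (ab.2 + ε)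

/-- Achievability by linear codes. -/
def LinAchievable (ab : ℝ × ℝ) : Prop :=
  ∀ ε > (0:ℝ), ∃ L₀ : ℕ, ∀ L ≥ L₀, ∃ C : Code L,
    IsZeroError C.base ∧ IsLinear C.base ∧
    ((C.base.stor 0 + C.base.stor 1 : ℕ) : ℝ) / 2 ≤ L * (ab.1 + ε) ∧
    (betaRate C.base 0 + betaRate C.base 1) / 2 ≤ L * (ab.2 + ε)

/-- The achievable storage-retrieval rate region `R`. -/
def Region : Set (ℝ × ℝ) := { ab | Achievable ab }

/-- The query distribution used for the `(2,2)` PIR system: for message 1,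
uniform on `{(1,1),(2,2)}`; for message 2, uniform on `{(1,2),(2,1)}`. -/
noncomputable def stdP : Fin 2 → Fin 2 × Fin 2 → ℝ :=
  fun k qq => if (k = 0 ∧ qq.1 = qq.2) ∨ (k = 1 ∧ qq.1 ≠ qq.2) then 1/2 else 0


section Entropy
open Classical

/-- Mass of the level set of `f` through `o`. -/
noncomputable def msf {Ω α : Type*} [Fintype Ω] (μ : Ω → ℝ) (f : Ω → α) (o : Ω) : ℝ :=
  ∑ o', if f o' = f o then μ o' else 0

/-- Entropy (in nats) of `f` under the weight `μ`. -/
noncomputable def ent {Ω α : Type*} [Fintype Ω] (μ : Ω → ℝ) (f : Ω → α) : ℝ :=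
  -∑ o, μ o * Real.log (msf μ f o)

variable {Ω α β γ δ : Type*} [Fintype Ω] {μ : Ω → ℝ}

theorem msf_nonneg (hμ : ∀ o, 0 ≤ μ o) (f : Ω → α) (o : Ω) : 0 ≤ msf μ f o :=
  Finset.sum_nonneg fun o' _ => by split_ifs <;> simp [hμ]

theorem le_msf (hμ : ∀ o, 0 ≤ μ o) (f : Ω → α) (o : Ω) : μ o ≤ msf μ f o := by
  have := Finset.single_le_sum (f := fun o' => if f o' = f o then μ o' else 0)
    (fun o' _ => by split_ifs <;> simp [hμ]) (Finset.mem_univ o)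
  simpa [msf] using this

theorem msf_pos (hμ : ∀ o, 0 ≤ μ o) (f : Ω → α) {o : Ω} (h : μ o ≠ 0) : 0 < msf μ f o :=
  lt_of_lt_of_le (lt_of_le_of_ne (hμ o) (Ne.symm h)) (le_msf hμ f o)

theorem msf_eq (f : Ω → α) {o o' : Ω} (h : f o = f o') : msf μ f o = msf μ f o' := by
  simp [msf, h]

theorem msf_mono (hμ : ∀ o, 0 ≤ μ o) {f : Ω → α} {g : Ω → β}
    (h : ∀ o o', μ o ≠ 0 → μ o' ≠ 0 → f o = f o' → g o = g o') {o : Ω} (ho : μ o ≠ 0) :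
    msf μ f o ≤ msf μ g o := by
  refine Finset.sum_le_sum fun o' _ => ?_
  by_cases h0 : μ o' = 0
  · simp [h0]
  · by_cases h1 : f o' = f o
    · simp [h1, h o' o h0 ho h1]
    · simp only [h1, if_false]; split_ifs <;> simp [hμ]

/-- If `f` determines `g` then `H(g) ≤ H(f)`. -/
theorem ent_mono (hμ : ∀ o, 0 ≤ μ o) {f : Ω → α} {g : Ω → β}
    (h : ∀ o o', μ o ≠ 0 → μ o' ≠ 0 → f o = f o' → g o = g o') : ent μ g ≤ ent μ f := by
  refine neg_le_neg (Finset.sum_le_sum fun o _ => ?_)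
  by_cases h0 : μ o = 0
  · simp [h0]
  · exact mul_le_mul_of_nonneg_left
      (Real.log_le_log (msf_pos hμ f h0) (msf_mono hμ h h0)) (hμ o)

theorem ent_congr (hμ : ∀ o, 0 ≤ μ o) {f : Ω → α} {g : Ω → β}
    (h : ∀ o o', μ o ≠ 0 → μ o' ≠ 0 → (f o = f o' ↔ g o = g o')) : ent μ f = ent μ g :=
  le_antisymm (ent_mono hμ fun o o' a b c => (h o o' a b).2 c)
    (ent_mono hμ fun o o' a b c => (h o o' a b).1 c)

/-- Sum over one class of `μ / mass` is at most one. -/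
theorem sum_class_le (hμ : ∀ o, 0 ≤ μ o) (f : Ω → α) (p : Ω → Prop)
    (hp : ∀ o o', p o → p o' → f o = f o') :
    ∑ o, (if p o then μ o / msf μ f o else 0) ≤ 1 := by
  by_cases hex : ∃ o, p o
  · obtain ⟨o₀, h₀⟩ := hex
    have h1 : ∑ o, (if p o then μ o / msf μ f o else 0)
        ≤ ∑ o, (if f o = f o₀ then μ o else 0) / msf μ f o₀ := by
      refine Finset.sum_le_sum fun o _ => ?_
      by_cases h : p o
      · have e := hp o o₀ h h₀
        simp [h, e, msf_eq f e]
      · simp only [h, if_false]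
        apply div_nonneg _ (msf_nonneg hμ f o₀)
        split_ifs <;> simp [hμ]
    refine h1.trans ?_
    rw [← Finset.sum_div]
    exact div_self_le_one _
  · push Not at hex
    simp [hex]

/-- Submodularity (nonnegativity of conditional mutual information). -/
theorem ent_submod_pair (hμ : ∀ o, 0 ≤ μ o) (f : Ω → α) (g : Ω → β) (z : Ω → γ)
    (hf : ∀ o o', f o = f o' → z o = z o') (hg : ∀ o o', g o = g o' → z o = z o') :
    ent μ (fun o => (f o, g o)) + ent μ z ≤ ent μ f + ent μ g := by
  set k : Ω → α × β := fun o => (f o, g o) with hk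
  have key : ∑ o, μ o * (msf μ f o * msf μ g o / (msf μ k o * msf μ z o)) ≤ ∑ o, μ o := by
    have e1 : ∀ o, μ o * (msf μ f o * msf μ g o / (msf μ k o * msf μ z o))
        = ∑ o1, ∑ o2, (if f o1 = f o ∧ g o2 = g o then
            μ o1 * μ o2 * (μ o / msf μ k o) / msf μ z o1 else 0) := by
      intro o
      have : ∀ o1 o2, (if f o1 = f o ∧ g o2 = g o then
            μ o1 * μ o2 * (μ o / msf μ k o) / msf μ z o1 else 0)
          = (if f o1 = f o then μ o1 else 0) * (if g o2 = g o then μ o2 else 0)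
            * (μ o / (msf μ k o * msf μ z o)) := by
        intro o1 o2
        by_cases h1 : f o1 = f o
        · by_cases h2 : g o2 = g o
          · simp only [h1, h2, and_self, if_true, msf_eq z (hf _ _ h1)]
            rw [div_mul_eq_div_div]; ring
          · simp [h2]
        · simp [h1]
      simp_rw [this, ← Finset.sum_mul, ← Finset.mul_sum, ← Finset.sum_mul]
      simp only [msf]
      ring
    simp_rw [e1]
    rw [Finset.sum_comm]
    refine Finset.sum_le_sum fun o1 _ => ?_
    rw [Finset.sum_comm]
    have e2 : ∀ o2, ∑ o, (if f o1 = f o ∧ g o2 = g o then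
            μ o1 * μ o2 * (μ o / msf μ k o) / msf μ z o1 else 0)
          ≤ (if z o2 = z o1 then μ o2 else 0) * (μ o1 / msf μ z o1) := by
      intro o2
      by_cases hz : z o2 = z o1
      · have h3 := sum_class_le hμ k (fun o => f o1 = f o ∧ g o2 = g o) (by
          rintro o o' ⟨a, b⟩ ⟨c, d⟩
          simp [hk, ← a, ← b, ← c, ← d])
        have h4 : ∑ o, (if f o1 = f o ∧ g o2 = g o then
            μ o1 * μ o2 * (μ o / msf μ k o) / msf μ z o1 else 0)
            = (μ o2 * (μ o1 / msf μ z o1)) *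
              ∑ o, (if f o1 = f o ∧ g o2 = g o then μ o / msf μ k o else 0) := by
          rw [Finset.mul_sum]
          refine Finset.sum_congr rfl fun o _ => ?_
          split_ifs <;> ring
        rw [h4]
        simp only [hz, if_true]
        exact mul_le_of_le_one_right
          (mul_nonneg (hμ _) (div_nonneg (hμ _) (msf_nonneg hμ _ _))) 
          (le_of_eq_of_le (Finset.sum_congr rfl fun o _ => by congr) h3)
      · have : ∀ o, ¬ (f o1 = f o ∧ g o2 = g o) := by
          rintro o ⟨a, b⟩
          exact hz ((hg _ _ b).trans (hf _ _ a).symm)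
        simp [hz, this]
    refine (Finset.sum_le_sum fun o2 _ => e2 o2).trans ?_
    rw [← Finset.sum_mul]
    change msf μ z o1 * _ ≤ _
    by_cases h0 : μ o1 = 0
    · simp [h0]
    · rw [mul_div_cancel₀ _ (msf_pos hμ z h0).ne']
  have hlog : ∀ o, μ o - μ o * (msf μ f o * msf μ g o / (msf μ k o * msf μ z o)) ≤
      μ o * Real.log (msf μ k o) + μ o * Real.log (msf μ z o)
       - μ o * Real.log (msf μ f o) - μ o * Real.log (msf μ g o) := by
    intro o
    by_cases h0 : μ o = 0
    · simp [h0]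
    · have pf := msf_pos hμ f h0
      have pg := msf_pos hμ g h0
      have pk := msf_pos hμ k h0
      have pz := msf_pos hμ z h0
      have h1 := Real.log_le_sub_one_of_pos
        (x := msf μ f o * msf μ g o / (msf μ k o * msf μ z o)) (by positivity)
      rw [Real.log_div (by positivity) (by positivity), Real.log_mul pf.ne' pg.ne',
        Real.log_mul pk.ne' pz.ne'] at h1
      nlinarith [mul_le_mul_of_nonneg_left h1 (hμ o)]
  have hs := Finset.sum_le_sum fun o (_ : o ∈ Finset.univ) => hlog o
  simp only [Finset.sum_sub_distrib, Finset.sum_add_distrib] at hs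
  simp only [ent]
  linarith

/-- Submodularity in lattice form. -/
theorem ent_submod (hμ : ∀ o, 0 ≤ μ o) (f : Ω → α) (g : Ω → β) (h : Ω → δ) (z : Ω → γ)
    (hf : ∀ o o', f o = f o' → z o = z o') (hg : ∀ o o', g o = g o' → z o = z o')
    (hh : ∀ o o', f o = f o' → g o = g o' → h o = h o') :
    ent μ h + ent μ z ≤ ent μ f + ent μ g := by
  have h1 := ent_submod_pair hμ f g z hf hg
  have h2 : ent μ h ≤ ent μ (fun o => (f o, g o)) :=
    ent_mono hμ fun o o' _ _ e => hh o o' (congrArg Prod.fst e) (congrArg Prod.snd e)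
  linarith

theorem ent_const (h1 : ∑ o, μ o = 1) (c : α) : ent μ (fun _ => c) = 0 := by
  simp [ent, msf, h1]

theorem ent_subadd (hμ : ∀ o, 0 ≤ μ o) (h1 : ∑ o, μ o = 1) (f : Ω → α) (g : Ω → β) (h : Ω → δ)
    (hh : ∀ o o', f o = f o' → g o = g o' → h o = h o') :
    ent μ h ≤ ent μ f + ent μ g := by
  have := ent_submod hμ f g h (fun _ => ()) (fun _ _ _ => rfl) (fun _ _ _ => rfl) hh
  rwa [ent_const h1, add_zero] at this

theorem ent_le_log_card [Fintype α] (hμ : ∀ o, 0 ≤ μ o) (h1 : ∑ o, μ o = 1) (f : Ω → α) :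
    ent μ f ≤ Real.log (Fintype.card α) := by
  have hne : Nonempty Ω := by
    by_contra hc
    rw [not_nonempty_iff] at hc
    simp at h1
  have hc : (0:ℝ) < Fintype.card α := by
    have : Nonempty α := ⟨f hne.some⟩
    exact_mod_cast Fintype.card_pos
  have key : ∑ o, μ o / msf μ f o ≤ Fintype.card α := by
    have : ∀ o, μ o / msf μ f o = ∑ a : α, if f o = a then μ o / msf μ f o else 0 := by
      intro o; simp
    rw [Finset.sum_congr rfl fun o _ => this o, Finset.sum_comm]
    calc _ ≤ ∑ _a : α, (1:ℝ) := Finset.sum_le_sum fun a _ =>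
            sum_class_le hμ f (fun o => f o = a) (fun o o' h h' => h.trans h'.symm)
      _ = _ := by simp
  have hlog : ∀ o, -(μ o * Real.log (msf μ f o)) - μ o * Real.log (Fintype.card α)
      ≤ (μ o / msf μ f o) / Fintype.card α - μ o := by
    intro o
    by_cases h0 : μ o = 0
    · simp [h0]
    · have pf := msf_pos hμ f h0
      have h2 := Real.log_le_sub_one_of_pos (x := 1 / (msf μ f o * Fintype.card α)) (by positivity)
      rw [one_div, Real.log_inv, Real.log_mul pf.ne' hc.ne'] at h2
      have h3 := mul_le_mul_of_nonneg_left h2 (hμ o)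
      have e : (μ o / msf μ f o) / Fintype.card α = μ o * (msf μ f o * Fintype.card α)⁻¹ := by
        rw [div_div, div_eq_mul_inv]
      rw [e]
      nlinarith
  have hs := Finset.sum_le_sum fun o (_ : o ∈ Finset.univ) => hlog o
  simp only [Finset.sum_sub_distrib, Finset.sum_neg_distrib, ← Finset.sum_mul, ← Finset.sum_div,
    h1] at hs
  have : (∑ o, μ o / msf μ f o) / Fintype.card α ≤ 1 := by
    rw [div_le_one hc]; exact key
  simp only [ent]
  linarith

/-- Conditionally independent copy given `S`. -/
noncomputable def cpy {Ω σ : Type*} [Fintype Ω] (μ : Ω → ℝ) (S : Ω → σ) (o : Ω × Ω) : ℝ :=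
  if S o.1 = S o.2 then μ o.1 * μ o.2 / msf μ S o.1 else 0

variable {σ : Type*} {S : Ω → σ}

theorem cpy_nonneg (hμ : ∀ o, 0 ≤ μ o) (o : Ω × Ω) : 0 ≤ cpy μ S o := by
  unfold cpy
  split_ifs
  · exact div_nonneg (mul_nonneg (hμ _) (hμ _)) (msf_nonneg hμ _ _)
  · exact le_rfl

theorem cpy_supp {o : Ω × Ω} (h : cpy μ S o ≠ 0) : S o.1 = S o.2 ∧ μ o.1 ≠ 0 ∧ μ o.2 ≠ 0 := by
  unfold cpy at h
  split_ifs at h with h1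
  · refine ⟨h1, ?_, ?_⟩ <;> rintro h2 <;> simp [h2] at h
  · simp at h

theorem cpy_sum_snd (hμ : ∀ o, 0 ≤ μ o) (o : Ω) : ∑ o', cpy μ S (o, o') = μ o := by
  have : ∀ o', cpy μ S (o, o') = (if S o' = S o then μ o' else 0) * (μ o / msf μ S o) := by
    intro o'
    by_cases h : S o' = S o
    · simp only [cpy, h, if_true]; ring
    · have h' : ¬ S o = S o' := fun e => h e.symm
      simp [cpy, h, h']
  simp_rw [this]
  rw [← Finset.sum_mul]
  change msf μ S o * _ = _
  by_cases h0 : μ o = 0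
  · simp [h0]
  · rw [mul_div_cancel₀ _ (msf_pos hμ S h0).ne']

theorem cpy_symm (o o' : Ω) : cpy μ S (o, o') = cpy μ S (o', o) := by
  by_cases h : S o = S o'
  · simp only [cpy, h, if_true, msf_eq S h, mul_comm]
  · have h' : ¬ S o' = S o := fun e => h e.symm
    simp [cpy, h, h']

theorem cpy_sum_fst (hμ : ∀ o, 0 ≤ μ o) (o : Ω) : ∑ o', cpy μ S (o', o) = μ o := by
  simp_rw [fun o' => cpy_symm (μ := μ) (S := S) o' o]
  exact cpy_sum_snd hμ o

theorem cpy_sum (hμ : ∀ o, 0 ≤ μ o) (h1 : ∑ o, μ o = 1) : ∑ o, cpy μ S o = 1 := by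
  rw [Fintype.sum_prod_type]
  simp_rw [cpy_sum_snd hμ]
  exact h1

theorem msf_cpy_fst (hμ : ∀ o, 0 ≤ μ o) (f : Ω → α) (o : Ω × Ω) :
    msf (cpy μ S) (fun o => f o.1) o = msf μ f o.1 := by
  simp only [msf]
  rw [Fintype.sum_prod_type]
  refine Finset.sum_congr rfl fun o1 _ => ?_
  by_cases h : f o1 = f o.1
  · simp [h, cpy_sum_snd hμ]
  · simp [h]

theorem sum_cpy_fst (hμ : ∀ o, 0 ≤ μ o) (u : Ω → ℝ) :
    ∑ o, cpy μ S o * u o.1 = ∑ o, μ o * u o := by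
  rw [Fintype.sum_prod_type]
  refine Finset.sum_congr rfl fun o1 _ => ?_
  dsimp only
  rw [← Finset.sum_mul, cpy_sum_snd hμ]

theorem sum_cpy_snd (hμ : ∀ o, 0 ≤ μ o) (u : Ω → ℝ) :
    ∑ o, cpy μ S o * u o.2 = ∑ o, μ o * u o := by
  rw [Fintype.sum_prod_type_right]
  refine Finset.sum_congr rfl fun o1 _ => ?_
  dsimp only
  rw [← Finset.sum_mul, cpy_sum_fst hμ]

theorem ent_cpy_fst (hμ : ∀ o, 0 ≤ μ o) (f : Ω → α) :
    ent (cpy μ S) (fun o => f o.1) = ent μ f := by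
  simp only [ent, msf_cpy_fst hμ]
  rw [sum_cpy_fst hμ (fun o => Real.log (msf μ f o))]

theorem msf_cpy_snd (hμ : ∀ o, 0 ≤ μ o) (f : Ω → α) (o : Ω × Ω) :
    msf (cpy μ S) (fun o => f o.2) o = msf μ f o.2 := by
  simp only [msf]
  rw [Fintype.sum_prod_type_right]
  refine Finset.sum_congr rfl fun o1 _ => ?_
  by_cases h : f o1 = f o.2
  · simp [h, cpy_sum_fst hμ]
  · simp [h]

theorem ent_cpy_snd (hμ : ∀ o, 0 ≤ μ o) (f : Ω → α) :
    ent (cpy μ S) (fun o => f o.2) = ent μ f := by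
  simp only [ent, msf_cpy_snd hμ]
  rw [sum_cpy_snd hμ (fun o => Real.log (msf μ f o))]

/-- The copy has the same joint law with functions of `S`. -/
theorem ent_cpy_pair (hμ : ∀ o, 0 ≤ μ o) (f : Ω → α) (V : Ω → β)
    (hf : ∀ o o', S o = S o' → f o = f o') :
    ent (cpy μ S) (fun o => (f o.1, V o.2)) = ent μ (fun o => (f o, V o)) := by
  rw [← ent_cpy_snd (S := S) hμ (fun o => (f o, V o))]
  refine ent_congr (cpy_nonneg hμ) fun o o' ho hb => ?_
  simp only [hf _ _ (cpy_supp ho).1, hf _ _ (cpy_supp hb).1]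

/-- Joint entropy with the copy. -/
theorem ent_cpy_joint (hμ : ∀ o, 0 ≤ μ o) (f : Ω → α) (V : Ω → β)
    (hf : ∀ o o', f o = f o' → S o = S o') :
    ent (cpy μ S) (fun o => (f o.1, V o.2))
      = ent μ f + ent μ (fun o => (S o, V o)) - ent μ S := by
  have hm : ∀ o, cpy μ S o ≠ 0 → msf (cpy μ S) (fun o => (f o.1, V o.2)) o
      = msf μ f o.1 * msf μ (fun o => (S o, V o)) o.2 / msf μ S o.1 := by
    intro o ho
    obtain ⟨hS, _, _⟩ := cpy_supp ho
    simp only [msf]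
    rw [Fintype.sum_prod_type, Finset.sum_mul_sum, Finset.sum_div]
    refine Finset.sum_congr rfl fun o1 _ => ?_
    rw [Finset.sum_div]
    refine Finset.sum_congr rfl fun o2 _ => ?_
    by_cases h1 : f o1 = f o.1
    · have e1 := hf _ _ h1
      by_cases h2 : V o2 = V o.2
      · by_cases h3 : S o2 = S o.2
        · simp [h1, h2, h3, cpy, e1, hS, msf]
        · have h3' : ¬ S o.1 = S o2 := fun e => h3 (e.symm.trans hS)
          simp [h1, h2, h3, cpy, e1, h3']
      · simp [h2]
    · simp [h1]
  have : ∀ o, cpy μ S o * Real.log (msf (cpy μ S) (fun o => (f o.1, V o.2)) o)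
      = cpy μ S o * Real.log (msf μ f o.1)
        + cpy μ S o * Real.log (msf μ (fun o => (S o, V o)) o.2)
        - cpy μ S o * Real.log (msf μ S o.1) := by
    intro o
    by_cases h0 : cpy μ S o = 0
    · simp [h0]
    · obtain ⟨_, h1, h2⟩ := cpy_supp h0
      have p1 := msf_pos hμ f h1
      have p2 := msf_pos hμ (fun o => (S o, V o)) h2
      have p3 := msf_pos hμ S h1
      rw [hm o h0, Real.log_div (by positivity) p3.ne', Real.log_mul p1.ne' p2.ne']
      ring
  simp only [ent]
  simp_rw [this]
  rw [Finset.sum_sub_distrib, Finset.sum_add_distrib,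
    sum_cpy_fst hμ (fun o => Real.log (msf μ f o)),
    sum_cpy_fst hμ (fun o => Real.log (msf μ S o)),
    sum_cpy_snd hμ (fun o => Real.log (msf μ (fun o => (S o, V o)) o))]
  ring

/-- The inequality along a path of five answers. -/
theorem path_ineq {M1 M2 T1 T2 T3 T4 T5 : Type*}
    (hμ : ∀ o, 0 ≤ μ o) (h1 : ∑ o, μ o = 1)
    (w1 X Y : Ω → M1) (w2 : Ω → M2)
    (A0 : Ω → T1) (A1 : Ω → T2) (A2 : Ω → T3) (B0 : Ω → T4) (B1 : Ω → T5)
    (d00 : ∀ o o', A0 o = A0 o' → B0 o = B0 o' → w1 o = w1 o')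
    (d10 : ∀ o o', A1 o = A1 o' → B0 o = B0 o' → w2 o = w2 o')
    (d11 : ∀ o o', A1 o = A1 o' → B1 o = B1 o' → w1 o = w1 o')
    (d21 : ∀ o o', A2 o = A2 o' → B1 o = B1 o' → w2 o = w2 o') :
    3 * ent μ (fun o => ((w1 o, w2 o), X o, Y o)) + ent μ X + ent μ Y ≤
      ent μ (fun o => (A0 o, X o)) + 2 * ent μ (fun o => (A1 o, X o))
      + ent μ (fun o => (A2 o, X o)) + 2 * ent μ (fun o => (B0 o, Y o))
      + 2 * ent μ (fun o => (B1 o, Y o)) := by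
  have i1 := ent_subadd hμ h1 (fun o => (A1 o, X o)) (fun o => (B0 o, Y o))
    (fun o => (A1 o, B0 o, X o, Y o)) (by simp only [Prod.mk.injEq]; tauto)
  have i3 := ent_subadd hμ h1 (fun o => (A2 o, X o)) (fun o => (B1 o, Y o))
    (fun o => (A2 o, B1 o, X o, Y o)) (by simp only [Prod.mk.injEq]; tauto)
  have i4 := ent_subadd hμ h1 (fun o => (A0 o, X o)) (fun o => (B0 o, Y o))
    (fun o => (A0 o, B0 o, X o, Y o)) (by simp only [Prod.mk.injEq]; tauto)
  have i8 := ent_submod hμ (fun o => (B1 o, Y o)) (fun o => (X o, Y o))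
    (fun o => (B1 o, X o, Y o)) Y (by simp only [Prod.mk.injEq]; tauto)
    (by simp only [Prod.mk.injEq]; tauto) (by simp only [Prod.mk.injEq]; tauto)
  have i2 := ent_submod hμ (fun o => (A1 o, X o)) (fun o => (B1 o, X o, Y o))
    (fun o => (A1 o, B1 o, X o, Y o)) X (by simp only [Prod.mk.injEq]; tauto)
    (by simp only [Prod.mk.injEq]; tauto) (by simp only [Prod.mk.injEq]; tauto)
  have i5 := ent_submod hμ (fun o => (A1 o, B0 o, X o, Y o)) (fun o => (A2 o, B1 o, X o, Y o))
    (fun o => ((w1 o, w2 o), X o, Y o)) (fun o => (w2 o, X o, Y o))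
    (by
      simp only [Prod.mk.injEq]
      rintro o o' ⟨a, b, c, d⟩
      exact ⟨d10 _ _ a b, c, d⟩)
    (by
      simp only [Prod.mk.injEq]
      rintro o o' ⟨a, b, c, d⟩
      exact ⟨d21 _ _ a b, c, d⟩)
    (by
      simp only [Prod.mk.injEq]
      rintro o o' ⟨a, b, c, d⟩ ⟨a', b', c', d'⟩
      exact ⟨⟨d11 _ _ a b', d10 _ _ a b⟩, c, d⟩)
  have i6 := ent_submod hμ (fun o => (A0 o, B0 o, X o, Y o)) (fun o => (A1 o, B1 o, X o, Y o))
    (fun o => ((w1 o, w2 o), X o, Y o)) (fun o => (w1 o, X o, Y o))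
    (by
      simp only [Prod.mk.injEq]
      rintro o o' ⟨a, b, c, d⟩
      exact ⟨d00 _ _ a b, c, d⟩)
    (by
      simp only [Prod.mk.injEq]
      rintro o o' ⟨a, b, c, d⟩
      exact ⟨d11 _ _ a b, c, d⟩)
    (by
      simp only [Prod.mk.injEq]
      rintro o o' ⟨a, b, c, d⟩ ⟨a', b', c', d'⟩
      exact ⟨⟨d00 _ _ a b, d10 _ _ a' b⟩, c, d⟩)
  have i7 := ent_submod hμ (fun o => (w1 o, X o, Y o)) (fun o => (w2 o, X o, Y o))
    (fun o => ((w1 o, w2 o), X o, Y o)) (fun o => (X o, Y o))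
    (by simp only [Prod.mk.injEq]; tauto) (by simp only [Prod.mk.injEq]; tauto)
    (by simp only [Prod.mk.injEq]; tauto)
  linarith

/-- The path inequality with the copies integrated out. -/
theorem path_ineq' {M1 M2 T1 T2 T3 T4 T5 σ₁ σ₂ : Type*}
    (hμ : ∀ o, 0 ≤ μ o) (h1 : ∑ o, μ o = 1)
    (w1 : Ω → M1) (w2 : Ω → M2) (S1 : Ω → σ₁) (S2 : Ω → σ₂)
    (A0 : σ₁ → T1) (A1 : σ₁ → T2) (A2 : σ₁ → T3) (B0 : σ₂ → T4) (B1 : σ₂ → T5)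
    (s1 : ∀ o o', w1 o = w1 o' → w2 o = w2 o' → S1 o = S1 o')
    (s2 : ∀ o o', w1 o = w1 o' → w2 o = w2 o' → S2 o = S2 o')
    (d00 : ∀ o o', A0 (S1 o) = A0 (S1 o') → B0 (S2 o) = B0 (S2 o') → w1 o = w1 o')
    (d10 : ∀ o o', A1 (S1 o) = A1 (S1 o') → B0 (S2 o) = B0 (S2 o') → w2 o = w2 o')
    (d11 : ∀ o o', A1 (S1 o) = A1 (S1 o') → B1 (S2 o) = B1 (S2 o') → w1 o = w1 o')
    (d21 : ∀ o o', A2 (S1 o) = A2 (S1 o') → B1 (S2 o) = B1 (S2 o') → w2 o = w2 o') :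
    3 * (ent μ (fun o => (w1 o, w2 o)) + ent μ (fun o => (S1 o, w1 o)) - ent μ S1
        + ent μ (fun o => (S2 o, w1 o)) - ent μ S2) + 2 * ent μ w1 ≤
      ent μ (fun o => (A0 (S1 o), w1 o)) + 2 * ent μ (fun o => (A1 (S1 o), w1 o))
      + ent μ (fun o => (A2 (S1 o), w1 o)) + 2 * ent μ (fun o => (B0 (S2 o), w1 o))
      + 2 * ent μ (fun o => (B1 (S2 o), w1 o)) := by
  set ν := cpy μ S1 with hν
  have nν : ∀ o, 0 ≤ ν o := cpy_nonneg hμ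
  set S2' : Ω × Ω → σ₂ := fun o => S2 o.1 with hS2'
  set κ := cpy ν S2' with hκ
  have nκ : ∀ o, 0 ≤ κ o := cpy_nonneg nν
  have h := path_ineq (μ := κ) nκ (cpy_sum nν (cpy_sum hμ h1))
    (fun o => w1 o.1.1) (fun o => w1 o.1.2) (fun o => w1 o.2.1) (fun o => w2 o.1.1)
    (fun o => A0 (S1 o.1.1)) (fun o => A1 (S1 o.1.1)) (fun o => A2 (S1 o.1.1))
    (fun o => B0 (S2 o.1.1)) (fun o => B1 (S2 o.1.1))
    (fun o o' => d00 _ _) (fun o o' => d10 _ _) (fun o o' => d11 _ _) (fun o o' => d21 _ _)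
  have eX : ent κ (fun o => w1 o.1.2) = ent μ w1 :=
    (ent_cpy_fst nν (fun o : Ω × Ω => w1 o.2)).trans (ent_cpy_snd hμ w1)
  have eY : ent κ (fun o => w1 o.2.1) = ent μ w1 :=
    (ent_cpy_snd nν (fun o : Ω × Ω => w1 o.1)).trans (ent_cpy_fst hμ w1)
  have eA : ∀ {T : Type _} (A : σ₁ → T), ent κ (fun o => (A (S1 o.1.1), w1 o.1.2))
      = ent μ (fun o => (A (S1 o), w1 o)) := fun A =>
    (ent_cpy_fst nν (fun o : Ω × Ω => (A (S1 o.1), w1 o.2))).trans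
      (ent_cpy_pair hμ (fun o => A (S1 o)) w1 (fun o o' e => congrArg A e))
  have eA1 : ent κ (fun o => (A1 (S1 o.1.1), w1 o.1.2))
      = ent μ (fun o => (A1 (S1 o), w1 o)) :=
    (ent_cpy_fst nν (fun o : Ω × Ω => (A1 (S1 o.1), w1 o.2))).trans
      (ent_cpy_pair hμ (fun o => A1 (S1 o)) w1 (fun o o' e => congrArg A1 e))
  have eA2 : ent κ (fun o => (A2 (S1 o.1.1), w1 o.1.2))
      = ent μ (fun o => (A2 (S1 o), w1 o)) :=
    (ent_cpy_fst nν (fun o : Ω × Ω => (A2 (S1 o.1), w1 o.2))).trans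
      (ent_cpy_pair hμ (fun o => A2 (S1 o)) w1 (fun o o' e => congrArg A2 e))
  have eB0 : ent κ (fun o => (B0 (S2 o.1.1), w1 o.2.1))
      = ent μ (fun o => (B0 (S2 o), w1 o)) :=
    (ent_cpy_pair nν (fun o : Ω × Ω => B0 (S2 o.1)) (fun o => w1 o.1)
      (fun o o' e => congrArg B0 e)).trans (ent_cpy_fst hμ (fun o => (B0 (S2 o), w1 o)))
  have eB1 : ent κ (fun o => (B1 (S2 o.1.1), w1 o.2.1))
      = ent μ (fun o => (B1 (S2 o), w1 o)) :=
    (ent_cpy_pair nν (fun o : Ω × Ω => B1 (S2 o.1)) (fun o => w1 o.1)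
      (fun o o' e => congrArg B1 e)).trans (ent_cpy_fst hμ (fun o => (B1 (S2 o), w1 o)))
  have eJ : ent κ (fun o => ((w1 o.1.1, w2 o.1.1), w1 o.1.2, w1 o.2.1))
      = ent μ (fun o => (w1 o, w2 o)) + ent μ (fun o => (S1 o, w1 o)) - ent μ S1
        + ent μ (fun o => (S2 o, w1 o)) - ent μ S2 := by
    have j1 : ent κ (fun o => ((w1 o.1.1, w2 o.1.1), w1 o.1.2, w1 o.2.1))
        = ent κ (fun o => (((w1 o.1.1, w2 o.1.1), w1 o.1.2), w1 o.2.1)) :=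
      ent_congr nκ fun o o' _ _ => by simp only [Prod.mk.injEq]; tauto
    have j2 := ent_cpy_joint (S := S2') nν (fun o : Ω × Ω => ((w1 o.1, w2 o.1), w1 o.2))
      (fun o => w1 o.1) (by
        simp only [Prod.mk.injEq]
        rintro o o' ⟨⟨a, b⟩, _⟩
        exact s2 _ _ a b)
    have j3 := ent_cpy_joint (S := S1) hμ (fun o => (w1 o, w2 o)) w1 (by
        simp only [Prod.mk.injEq]
        rintro o o' ⟨a, b⟩
        exact s1 _ _ a b)
    have j4 : ent ν (fun o => (S2' o, w1 o.1)) = ent μ (fun o => (S2 o, w1 o)) :=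
      ent_cpy_fst hμ (fun o => (S2 o, w1 o))
    have j5 : ent ν S2' = ent μ S2 := ent_cpy_fst hμ S2
    rw [j1, j2, j3, j4, j5]
  rw [eX, eY, eA A0, eA1, eA2, eB0, eB1, eJ] at h
  linarith

end Entropy

section Averaging

variable {Q : Type} [Fintype Q]

theorem kernel_avg (R : Q → Q → ℝ) (hR : ∀ x y, 0 ≤ R x y) (v : Q → ℝ) :
    ∃ K : Q → ℝ, (∀ x c, (∃ y, R x y ≠ 0) → (∀ y, R x y ≠ 0 → c ≤ v y) → c ≤ K x) ∧
      ∑ x, ∑ y, R x y * K x = ∑ x, ∑ y, R x y * v y := by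
  refine ⟨fun x => (∑ y, R x y * v y) / ∑ y, R x y, ?_, ?_⟩
  · rintro x c ⟨y₀, hy₀⟩ h
    have hp : 0 < ∑ y, R x y := Finset.sum_pos' (fun y _ => hR x y)
      ⟨y₀, Finset.mem_univ _, lt_of_le_of_ne (hR x y₀) (Ne.symm hy₀)⟩
    rw [le_div_iff₀ hp, Finset.mul_sum]
    refine Finset.sum_le_sum fun y _ => ?_
    by_cases h0 : R x y = 0
    · simp [h0]
    · rw [mul_comm]; exact mul_le_mul_of_nonneg_left (h y h0) (hR x y)
  · refine Finset.sum_congr rfl fun x _ => ?_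
    rw [← Finset.sum_mul]
    by_cases h0 : ∑ y, R x y = 0
    · have : ∀ y, R x y = 0 := fun y =>
        (Finset.sum_eq_zero_iff_of_nonneg (fun y _ => hR x y)).1 h0 y (Finset.mem_univ y)
      simp [this]
    · rw [mul_div_cancel₀ _ h0]

theorem path_avg (P0 P1 : Q → Q → ℝ) (h0 : ∀ x y, 0 ≤ P0 x y) (h1 : ∀ x y, 0 ≤ P1 x y)
    (hs : ∑ x, ∑ y, P0 x y = 1)
    (ma : ∀ x, ∑ y, P0 x y = ∑ y, P1 x y) (mb : ∀ y, ∑ x, P0 x y = ∑ x, P1 x y)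
    (f g : Q → ℝ) (c : ℝ)
    (h : ∀ a0 b0 a1 b1 a2, P0 a0 b0 ≠ 0 → P1 a1 b0 ≠ 0 → P0 a1 b1 ≠ 0 → P1 a2 b1 ≠ 0 →
      c ≤ f a0 + 2 * f a1 + f a2 + 2 * g b0 + 2 * g b1) :
    c ≤ 4 * (∑ x, ∑ y, P0 x y * f x) + 4 * (∑ x, ∑ y, P0 x y * g y) := by
  have exb : ∀ x y, P0 x y ≠ 0 → ∃ x', P1 x' y ≠ 0 := by
    intro x y hxy
    by_contra hc
    push Not at hc
    have : ∑ x, P0 x y = 0 := by rw [mb y]; simp [hc]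
    exact hxy ((Finset.sum_eq_zero_iff_of_nonneg (fun x _ => h0 x y)).1 this x (Finset.mem_univ x))
  have exa : ∀ x y, P1 x y ≠ 0 → ∃ y', P0 x y' ≠ 0 := by
    intro x y hxy
    by_contra hc
    push Not at hc
    have : ∑ y, P1 x y = 0 := by rw [← ma x]; simp [hc]
    exact hxy ((Finset.sum_eq_zero_iff_of_nonneg (fun y _ => h1 x y)).1 this y (Finset.mem_univ y))
  have va : ∀ u : Q → ℝ, ∑ x, ∑ y, P0 x y * u x = ∑ x, ∑ y, P1 x y * u x := by
    intro u; simp_rw [← Finset.sum_mul, ma]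
  have vb : ∀ u : Q → ℝ, ∑ x, ∑ y, P0 x y * u y = ∑ x, ∑ y, P1 x y * u y := by
    intro u
    rw [Finset.sum_comm, Finset.sum_comm (f := fun x y => P1 x y * u y)]
    simp_rw [← Finset.sum_mul, mb]
  obtain ⟨K1, k1, e1⟩ := kernel_avg (fun y x => P1 x y) (fun y x => h1 x y) f
  obtain ⟨K2, k2, e2⟩ := kernel_avg P0 h0 (fun y => 2 * g y + K1 y)
  obtain ⟨K3, k3, e3⟩ := kernel_avg (fun y x => P1 x y) (fun y x => h1 x y)
    (fun x => 2 * f x + K2 x)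
  rw [Finset.sum_comm, Finset.sum_comm (f := fun x y => P1 y x * f y)] at e1
  rw [Finset.sum_comm, Finset.sum_comm (f := fun x y => P1 y x * (2 * f y + K2 y))] at e3
  have s1 : ∀ a0 b0 a1 b1, P0 a0 b0 ≠ 0 → P1 a1 b0 ≠ 0 → P0 a1 b1 ≠ 0 →
      c ≤ f a0 + 2 * f a1 + 2 * g b0 + (2 * g b1 + K1 b1) := by
    intro a0 b0 a1 b1 q1 q2 q3
    have := k1 b1 (c - (f a0 + 2 * f a1 + 2 * g b0 + 2 * g b1)) (exb _ _ q3)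
      (fun a2 q4 => by linarith [h a0 b0 a1 b1 a2 q1 q2 q3 q4])
    linarith
  have s2 : ∀ a0 b0 a1, P0 a0 b0 ≠ 0 → P1 a1 b0 ≠ 0 →
      c ≤ f a0 + 2 * g b0 + (2 * f a1 + K2 a1) := by
    intro a0 b0 a1 q1 q2
    have := k2 a1 (c - (f a0 + 2 * f a1 + 2 * g b0)) (exa _ _ q2)
      (fun b1 q3 => by linarith [s1 a0 b0 a1 b1 q1 q2 q3])
    linarith
  have s3 : ∀ a0 b0, P0 a0 b0 ≠ 0 → c ≤ f a0 + 2 * g b0 + K3 b0 := by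
    intro a0 b0 q1
    have := k3 b0 (c - (f a0 + 2 * g b0)) (exb _ _ q1)
      (fun a1 q2 => by linarith [s2 a0 b0 a1 q1 q2])
    linarith
  have s4 : ∑ x, ∑ y, P0 x y * c ≤ ∑ x, ∑ y, P0 x y * (f x + 2 * g y + K3 y) := by
    refine Finset.sum_le_sum fun x _ => Finset.sum_le_sum fun y _ => ?_
    by_cases hz : P0 x y = 0
    · simp [hz]
    · exact mul_le_mul_of_nonneg_left (s3 x y hz) (h0 x y)
  simp_rw [← Finset.sum_mul] at s4
  rw [hs, one_mul] at s4
  have lin : ∑ x, ∑ y, P0 x y * (f x + 2 * g y + K3 y) = ∑ x, ∑ y, P0 x y * f x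
      + 2 * ∑ x, ∑ y, P0 x y * g y + ∑ x, ∑ y, P0 x y * K3 y := by
    simp only [Finset.mul_sum, ← Finset.sum_add_distrib]
    exact Finset.sum_congr rfl fun x _ => Finset.sum_congr rfl fun y _ => by ring
  have lin2 : ∑ x, ∑ y, P1 x y * (2 * f x + K2 x) = 2 * ∑ x, ∑ y, P1 x y * f x
      + ∑ x, ∑ y, P1 x y * K2 x := by
    simp only [Finset.mul_sum, ← Finset.sum_add_distrib]
    exact Finset.sum_congr rfl fun x _ => Finset.sum_congr rfl fun y _ => by ring
  have lin3 : ∑ x, ∑ y, P0 x y * (2 * g y + K1 y) = 2 * ∑ x, ∑ y, P0 x y * g y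
      + ∑ x, ∑ y, P0 x y * K1 y := by
    simp only [Finset.mul_sum, ← Finset.sum_add_distrib]
    exact Finset.sum_congr rfl fun x _ => Finset.sum_congr rfl fun y _ => by ring
  have a1 := va f
  have a2 := va K2
  have b1 := vb K1
  have b3 := vb K3
  linarith

end Averaging


section Main
open Classical

theorem ent_unif {Ω α : Type*} [Fintype Ω] [Nonempty Ω] (f : Ω → α)
    (hf : Function.Injective f) :
    ent (fun _ : Ω => ((Fintype.card Ω : ℝ))⁻¹) f = Real.log (Fintype.card Ω) := by
  have hm : ∀ o, msf (fun _ : Ω => ((Fintype.card Ω : ℝ))⁻¹) f o = ((Fintype.card Ω : ℝ))⁻¹ := by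
    intro o
    simp [msf, hf.eq_iff]
  have hc : (Fintype.card Ω : ℝ) ≠ 0 := by exact_mod_cast Fintype.card_ne_zero
  simp only [ent, hm, Finset.sum_const, Finset.card_univ, nsmul_eq_mul, Real.log_inv]
  field_simp

theorem log_card_vec (n : ℕ) :
    Real.log (Fintype.card (Fin n → ZMod 2)) = n * Real.log 2 := by
  simp [Real.log_pow]

theorem marg_fst (C : CodeBase L Q) (x : Q) : ∑ y, C.P 0 (x, y) = ∑ y, C.P 1 (x, y) := by
  have h := C.privacy 0 x (C.phi 0 (0, 0))
  have hc : ((Finset.univ.filter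
      (fun w : Msg L × Msg L => C.phi 0 w = C.phi 0 (0, 0))).card : ℝ) ≠ 0 := by
    have : 0 < (Finset.univ.filter
      (fun w : Msg L × Msg L => C.phi 0 w = C.phi 0 (0, 0))).card :=
      Finset.card_pos.2 ⟨(0, 0), by simp⟩
    exact_mod_cast this.ne'
  have h2 := mul_right_cancel₀ (by convert hc) h
  simp only [if_true, Fintype.sum_prod_type] at h2
  have e : ∀ k, ∑ a, ∑ y, (if a = x then C.P k (a, y) else 0) = ∑ y, C.P k (x, y) := by
    intro k
    rw [Finset.sum_comm]
    simp
  rw [← e 0, ← e 1]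
  convert h2

theorem marg_snd (C : CodeBase L Q) (y : Q) : ∑ x, C.P 0 (x, y) = ∑ x, C.P 1 (x, y) := by
  have h := C.privacy 1 y (C.phi 1 (0, 0))
  have hc : ((Finset.univ.filter
      (fun w : Msg L × Msg L => C.phi 1 w = C.phi 1 (0, 0))).card : ℝ) ≠ 0 := by
    have : 0 < (Finset.univ.filter
      (fun w : Msg L × Msg L => C.phi 1 w = C.phi 1 (0, 0))).card :=
      Finset.card_pos.2 ⟨(0, 0), by simp⟩
    exact_mod_cast this.ne'
  have h2 := mul_right_cancel₀ (by convert hc) h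
  simp only [one_ne_zero, if_false, Fintype.sum_prod_type] at h2
  have e : ∀ k, ∑ x, ∑ b, (if b = y then C.P k (x, b) else 0) = ∑ x, C.P k (x, y) := by
    intro k
    simp
  rw [← e 0, ← e 1]
  convert h2

theorem det_msg (C : CodeBase L Q) (hC : IsZeroError C) (k : Fin 2) {a b : Q}
    (hP : C.P k (a, b) ≠ 0) (o o' : Msg L × Msg L)
    (ha : C.ans 0 a (C.phi 0 o) = C.ans 0 a (C.phi 0 o'))
    (hb : C.ans 1 b (C.phi 1 o) = C.ans 1 b (C.phi 1 o')) : target k o = target k o' := by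
  rw [← hC k o (a, b) hP, ← hC k o' (a, b) hP]
  simp only [retrieved, ha, hb]

theorem code_bound (C : CodeBase L Q) (hC : IsZeroError C) :
    20 * (L : ℝ) ≤ 3 * ((C.stor 0 : ℝ) + C.stor 1) + 8 * (betaRate C 0 + betaRate C 1) := by
  set ℓ := Real.log 2 with hℓ
  have ℓpos : 0 < ℓ := Real.log_pos (by norm_num)
  set μ : Msg L × Msg L → ℝ := fun _ => ((Fintype.card (Msg L × Msg L) : ℝ))⁻¹ with hμd
  have hμ : ∀ o, 0 ≤ μ o := fun o => by simp only [hμd]; positivity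
  have h1 : ∑ o, μ o = 1 := by
    have hc : (Fintype.card (Msg L × Msg L) : ℝ) ≠ 0 := by exact_mod_cast Fintype.card_ne_zero
    simp only [hμd, Finset.sum_const, Finset.card_univ, nsmul_eq_mul]
    exact mul_inv_cancel₀ hc
  have d1 : ∀ a b, C.P 0 (a, b) ≠ 0 → ∀ o o' : Msg L × Msg L,
      C.ans 0 a (C.phi 0 o) = C.ans 0 a (C.phi 0 o') →
      C.ans 1 b (C.phi 1 o) = C.ans 1 b (C.phi 1 o') → o.1 = o'.1 := by
    intro a b hP o o' ha hb
    simpa [target] using det_msg C hC 0 hP o o' ha hb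
  have d2 : ∀ a b, C.P 1 (a, b) ≠ 0 → ∀ o o' : Msg L × Msg L,
      C.ans 0 a (C.phi 0 o) = C.ans 0 a (C.phi 0 o') →
      C.ans 1 b (C.phi 1 o) = C.ans 1 b (C.phi 1 o') → o.2 = o'.2 := by
    intro a b hP o o' ha hb
    simpa [target] using det_msg C hC 1 hP o o' ha hb
  have hW : ent μ (fun o : Msg L × Msg L => (o.1, o.2)) = 2 * (L * ℓ) := by
    rw [hμd, ent_unif _ (fun o o' e => e), Fintype.card_prod, Nat.cast_mul,
      Real.log_mul (by exact_mod_cast Fintype.card_ne_zero)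
        (by exact_mod_cast Fintype.card_ne_zero), log_card_vec]
    ring
  have hW1 : L * ℓ ≤ ent μ (fun o : Msg L × Msg L => o.1) := by
    have a1 := ent_subadd hμ h1 (fun o => o.1) (fun o => o.2) (fun o => (o.1, o.2))
      (fun o o' e e' => by simp [e, e'])
    have a2 := ent_le_log_card hμ h1 (fun o => o.2)
    rw [log_card_vec] at a2
    linarith
  set f : Q → ℝ := fun q => ent μ (fun o => (C.ans 0 q (C.phi 0 o), o.1)) with hf
  set g : Q → ℝ := fun q => ent μ (fun o => (C.ans 1 q (C.phi 1 o), o.1)) with hg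
  set hS1 := ent μ (C.phi 0) with hhS1
  set hS2 := ent μ (C.phi 1) with hhS2
  set hS1W := ent μ (fun o => (C.phi 0 o, o.1)) with hhS1W
  set hS2W := ent μ (fun o => (C.phi 1 o, o.1)) with hhS2W
  have hs : ∑ x, ∑ y, C.P 0 (x, y) = 1 := by
    rw [← C.P_sum 0, Fintype.sum_prod_type]
  have main := path_avg (fun x y => C.P 0 (x, y)) (fun x y => C.P 1 (x, y))
    (fun x y => C.P_nonneg _ _) (fun x y => C.P_nonneg _ _) hs (marg_fst C) (marg_snd C) f g
    (3 * (2 * (L * ℓ) + hS1W - hS1 + hS2W - hS2) + 2 * (L * ℓ)) (by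
      intro a0 b0 a1 b1 a2 q1 q2 q3 q4
      have := path_ineq' hμ h1 (fun o => o.1) (fun o => o.2) (C.phi 0) (C.phi 1)
        (C.ans 0 a0) (C.ans 0 a1) (C.ans 0 a2) (C.ans 1 b0) (C.ans 1 b1)
        (fun o o' e e' => by rw [Prod.ext e e']) (fun o o' e e' => by rw [Prod.ext e e'])
        (d1 _ _ q1) (d2 _ _ q2) (d1 _ _ q3) (d2 _ _ q4)
      rw [hW] at this
      simp only [hf, hg]
      linarith)
  have edge : ∀ a b, C.P 0 (a, b) ≠ 0 →
      3 * (f a + 2 * (L * ℓ) - hS1W) + 3 * (g b + 2 * (L * ℓ) - hS2W) + f a + g b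
        ≤ 8 * (((C.blen 0 a : ℝ) + C.blen 1 b) * ℓ) := by
    intro a b hP
    obtain ⟨a', ha'⟩ : ∃ a', C.P 1 (a', b) ≠ 0 := by
      by_contra hc
      push Not at hc
      have : ∑ x, C.P 0 (x, b) = 0 := by rw [marg_snd C b]; simp [hc]
      exact hP ((Finset.sum_eq_zero_iff_of_nonneg (fun x _ => C.P_nonneg _ _)).1 this a
        (Finset.mem_univ a))
    obtain ⟨b', hb'⟩ : ∃ b', C.P 1 (a, b') ≠ 0 := by
      by_contra hc
      push Not at hc
      have : ∑ y, C.P 0 (a, y) = 0 := by rw [marg_fst C a]; simp [hc]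
      exact hP ((Finset.sum_eq_zero_iff_of_nonneg (fun y _ => C.P_nonneg _ _)).1 this b
        (Finset.mem_univ b))
    have k1 := ent_submod hμ
      (fun o => (C.ans 0 a (C.phi 0 o), C.ans 1 b (C.phi 1 o))) (fun o => (C.phi 0 o, o.1))
      (fun o => (o.1, o.2)) (fun o => (C.ans 0 a (C.phi 0 o), o.1))
      (by
        simp only [Prod.mk.injEq]
        rintro o o' ⟨x, y⟩
        exact ⟨x, d1 _ _ hP _ _ x y⟩)
      (by
        simp only [Prod.mk.injEq]
        rintro o o' ⟨x, y⟩
        exact ⟨by rw [x], y⟩)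
      (by
        simp only [Prod.mk.injEq]
        rintro o o' ⟨x, y⟩ ⟨z, w⟩
        exact ⟨w, d2 _ _ ha' _ _ (by rw [z]) y⟩)
    have k2 := ent_submod hμ
      (fun o => (C.ans 0 a (C.phi 0 o), C.ans 1 b (C.phi 1 o))) (fun o => (C.phi 1 o, o.1))
      (fun o => (o.1, o.2)) (fun o => (C.ans 1 b (C.phi 1 o), o.1))
      (by
        simp only [Prod.mk.injEq]
        rintro o o' ⟨x, y⟩
        exact ⟨y, d1 _ _ hP _ _ x y⟩)
      (by
        simp only [Prod.mk.injEq]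
        rintro o o' ⟨x, y⟩
        exact ⟨by rw [x], y⟩)
      (by
        simp only [Prod.mk.injEq]
        rintro o o' ⟨x, y⟩ ⟨z, w⟩
        exact ⟨w, d2 _ _ hb' _ _ x (by rw [z])⟩)
    have k3 : f a ≤ ent μ (fun o => (C.ans 0 a (C.phi 0 o), C.ans 1 b (C.phi 1 o))) :=
      ent_mono hμ (by
        simp only [Prod.mk.injEq]
        rintro o o' _ _ ⟨x, y⟩
        exact ⟨x, d1 _ _ hP _ _ x y⟩)
    have k4 : g b ≤ ent μ (fun o => (C.ans 0 a (C.phi 0 o), C.ans 1 b (C.phi 1 o))) :=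
      ent_mono hμ (by
        simp only [Prod.mk.injEq]
        rintro o o' _ _ ⟨x, y⟩
        exact ⟨y, d1 _ _ hP _ _ x y⟩)
    have k5 := ent_subadd hμ h1 (fun o => C.ans 0 a (C.phi 0 o)) (fun o => C.ans 1 b (C.phi 1 o))
      (fun o => (C.ans 0 a (C.phi 0 o), C.ans 1 b (C.phi 1 o))) (fun o o' e e' => by rw [e, e'])
    have k6 := ent_le_log_card hμ h1 (fun o => C.ans 0 a (C.phi 0 o))
    have k7 := ent_le_log_card hμ h1 (fun o => C.ans 1 b (C.phi 1 o))
    rw [log_card_vec] at k6 k7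
    rw [hW] at k1 k2
    simp only [hf, hg] at k3 k4 ⊢
    linarith
  have hst1 : hS1 ≤ C.stor 0 * ℓ := by
    have := ent_le_log_card hμ h1 (C.phi 0)
    rwa [log_card_vec] at this
  have hst2 : hS2 ≤ C.stor 1 * ℓ := by
    have := ent_le_log_card hμ h1 (C.phi 1)
    rwa [log_card_vec] at this
  have b0 : betaRate C 0 = ∑ x, ∑ y, C.P 0 (x, y) * (C.blen 0 x : ℝ) := by
    simp [betaRate, Fintype.sum_prod_type]
  have b1 : betaRate C 1 = ∑ x, ∑ y, C.P 0 (x, y) * (C.blen 1 y : ℝ) := by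
    simp [betaRate, Fintype.sum_prod_type]
  have avg : ∑ x, ∑ y, C.P 0 (x, y) * (4 * f x + 4 * g y + (12 * (L * ℓ) - 3 * hS1W - 3 * hS2W))
      ≤ ∑ x, ∑ y, C.P 0 (x, y) * (8 * (((C.blen 0 x : ℝ) + C.blen 1 y) * ℓ)) := by
    refine Finset.sum_le_sum fun x _ => Finset.sum_le_sum fun y _ => ?_
    by_cases hz : C.P 0 (x, y) = 0
    · simp [hz]
    · exact mul_le_mul_of_nonneg_left (by linarith [edge x y hz]) (C.P_nonneg _ _)
  have l1 : ∀ c : ℝ, ∑ x, ∑ y, C.P 0 (x, y) * (4 * f x + 4 * g y + c)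
      = 4 * (∑ x, ∑ y, C.P 0 (x, y) * f x) + 4 * (∑ x, ∑ y, C.P 0 (x, y) * g y) + c := by
    intro c
    have : c = ∑ x, ∑ y, C.P 0 (x, y) * c := by
      simp_rw [← Finset.sum_mul]; rw [hs, one_mul]
    conv_rhs => rw [this]
    simp only [Finset.mul_sum, ← Finset.sum_add_distrib]
    exact Finset.sum_congr rfl fun x _ => Finset.sum_congr rfl fun y _ => by ring
  have l2 : ∑ x, ∑ y, C.P 0 (x, y) * (8 * (((C.blen 0 x : ℝ) + C.blen 1 y) * ℓ))
      = 8 * (betaRate C 0 + betaRate C 1) * ℓ := by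
    rw [b0, b1]
    simp only [Finset.mul_sum, Finset.sum_mul, ← Finset.sum_add_distrib]
    exact Finset.sum_congr rfl fun x _ => Finset.sum_congr rfl fun y _ => by ring
  rw [l1, l2] at avg
  have fin : 20 * (L : ℝ) * ℓ ≤
      (3 * ((C.stor 0 : ℝ) + C.stor 1) + 8 * (betaRate C 0 + betaRate C 1)) * ℓ := by
    linarith
  exact le_of_mul_le_mul_right fin ℓpos

end Main

/-- Every pair `(ᾱ, β̄)` in the achievable storage-retrieval rate region
of the (2,2) PIR problem satisfies `3ᾱ + 8β̄ ≥ 10`. -/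
theorem statement6 (ab : ℝ × ℝ) (h : ab ∈ Region) : 10 ≤ 3 * ab.1 + 8 * ab.2 := by
  refine le_of_forall_pos_le_add fun δ hδ => ?_
  obtain ⟨L₀, hL⟩ := h (δ / 11) (by positivity)
  obtain ⟨C, hz, hs, hb⟩ := hL (max L₀ 1) (le_max_left _ _)
  have key := code_bound C.base hz
  have hLp : (0:ℝ) < ((max L₀ 1 : ℕ) : ℝ) := by
    exact_mod_cast lt_of_lt_of_le Nat.one_pos (le_max_right L₀ 1)
  generalize ((max L₀ 1 : ℕ) : ℝ) = N at *
  rw [Nat.cast_add] at hs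
  have : N * 10 ≤ N * (3 * ab.1 + 8 * ab.2 + δ) := by
    linarith
  exact le_of_mul_le_mul_left this hLp

end PIR
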